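/- arXiv:1311.0577 — 2 statements merged into one kernel-verified Lean document; each statement's English description precedes it below -/
import Mathlib

section
/- Let Q = x^30 - 13x^29 + 116x^28 - 899x^27 + 6003x^26 - 33002x^25 + 142158x^24 - 437871x^23 + 599981x^22 + 3161522x^21 - 30157709x^20 + 149069425x^19 - 545068137x^18 + 1602112888x^17 - 3929042061x^16 + 8240756348x^15 - 15020495335x^14 + 23992472995x^13 - 33394267804x^12 + 40034881756x^11 - 40888329774x^10 + 35730188833x^9 - 27316581262x^8 + 17713731976x^7 - 7068248851x^6 - 1463296732x^5 + 4054490087x^4 - 2555610007x^3 + 2573924261x^2 + 2363203645x - 261910751 ∈ ℚ[x], which is irreducible, and let K = ℚ[x]/(Q) be the number field it defines. The discriminant of K over ℚ equals 29^43. -/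
open Polynomial
noncomputable def Q : Polynomial ℚ :=
  X^30 - 13*X^29 + 116*X^28 - 899*X^27 + 6003*X^26 - 33002*X^25 + 142158*X^24 - 437871*X^23 + 599981*X^22 + 3161522*X^21 - 30157709*X^20 + 149069425*X^19 - 545068137*X^18 + 1602112888*X^17 - 3929042061*X^16 + 8240756348*X^15 - 15020495335*X^14 + 23992472995*X^13 - 33394267804*X^12 + 40034881756*X^11 - 40888329774*X^10 + 35730188833*X^9 - 27316581262*X^8 + 17713731976*X^7 - 7068248851*X^6 - 1463296732*X^5 + 4054490087*X^4 - 2555610007*X^3 + 2573924261*X^2 + 2363203645*X - 261910751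

namespace DQ

/-- polynomial with given coefficients, constant term first -/
noncomputable def P : List ℤ → ℤ[X]
  | [] => 0
  | a :: l => C a + X * P l

lemma P_coeff (l : List ℤ) (k : ℕ) : (P l).coeff k = l.getD k 0 := by
  induction l generalizing k with
  | nil => simp [P]
  | cons a l ih =>
    cases k with
    | zero => simp [P]
    | succ k => rw [P, coeff_add, coeff_X_mul, ih, coeff_C]; simp

lemma P_deg (l : List ℤ) (n : ℕ) (h : l.length ≤ n + 1) : (P l).natDegree ≤ n := by
  rw [natDegree_le_iff_coeff_eq_zero]
  intro k hk
  rw [P_coeff, List.getD_eq_default]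
  omega

/-- force the evaluation of an integer -/
def fz {α : Type} (x : ℤ) (k : ℤ → α) : α :=
  match x with
  | Int.ofNat 0 => k 0
  | Int.ofNat (n+1) => k (Int.ofNat (n+1))
  | Int.negSucc 0 => k (Int.negSucc 0)
  | Int.negSucc (n+1) => k (Int.negSucc (n+1))

lemma fz_eq {α : Type} (x : ℤ) (k : ℤ → α) : fz x k = k x := by
  unfold fz; split <;> rfl

/-- `c2 f - q1 X g - q0 g`, where `p` is the coefficient of `g` preceding -/
def comb (c2 q1 q0 p : ℤ) : List ℤ → List ℤ → List ℤ
  | [], _ => []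
  | a :: f, [] => fz (c2 * a - q1 * p) fun x => x :: comb c2 q1 q0 0 f []
  | a :: f, b :: g => fz (c2 * a - q1 * p - q0 * b) fun x => x :: comb c2 q1 q0 b f g

lemma comb_eq (c2 q1 q0 p : ℤ) (f g : List ℤ) (h : g.length + 1 ≤ f.length) :
    P (comb c2 q1 q0 p f g) = C c2 * P f - C q1 * (C p + X * P g) - C q0 * P g := by
  induction f generalizing p g with
  | nil => simp at h
  | cons a f ih =>
    cases g with
    | nil =>
      rw [comb, fz_eq]
      cases f with
      | nil => simp [P, comb]
      | cons a' f =>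
        simp only [P]
        rw [ih _ _ (by simp)]
        simp only [P, map_sub, map_mul, map_zero]
        ring
    | cons b g =>
      rw [comb, fz_eq]
      simp only [P]
      rw [ih _ _ (by simpa using h)]
      simp only [map_sub, map_mul]
      ring

/-- exact division of all coefficients (last two dropped) -/
def divAll (d : ℤ) : ℕ → List ℤ → List ℤ
  | 0, _ => []
  | _, [] => []
  | n+1, a :: l => fz (a / d) fun x => x :: divAll d n l

def chk (d : ℤ) : List ℤ → List ℤ → Bool
  | [], [] => true
  | [], b :: l => decide (b = 0) && chk d [] l
  | _, [] => false
  | a :: r, b :: l => decide (d * a = b) && chk d r l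

lemma chk_eq (d : ℤ) (r l : List ℤ) (h : chk d r l = true) : P l = C d * P r := by
  induction l generalizing r with
  | nil => cases r with
    | nil => simp [P]
    | cons a r => simp [chk] at h
  | cons b l ih => cases r with
    | nil =>
      simp only [chk, Bool.and_eq_true, decide_eq_true_eq] at h
      have := ih _ h.2
      simp [P, h.1, this]
    | cons a r =>
      simp only [chk, Bool.and_eq_true, decide_eq_true_eq] at h
      have := ih _ h.2
      simp only [P, ← h.1, this, map_mul]
      ring

def run : ℕ → ℤ → List ℤ → List ℤ → Option ℤ
  | 0, _, _, g => some (g.getD 0 0)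
  | n+1, a, f, g =>
    fz (g.getD (n+1) 0) fun c =>
    fz (g.getD n 0) fun c1 =>
    fz (f.getD (n+2) 0) fun a0 =>
    fz (f.getD (n+1) 0) fun a1 =>
    (fun L => (fun r =>
      if chk (a*a) r L && decide (c ≠ 0) && decide (r.length ≤ n+1) &&
         decide (g.length + 1 ≤ f.length) then run n c g r else none)
      (divAll (a*a) (n+1) L)) (comb (c*c) (c*a0) (c*a1-a0*c1) 0 f g)

lemma run_eq (n : ℕ) (a : ℤ) (f g : List ℤ) (v : ℤ) (hf : f.length ≤ n + 2)
    (hg : g.length ≤ n + 1) (h : run n a f g = some v) :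
    resultant (P f) (P g) (n+1) n = a ^ (2*n) * v := by
  induction n generalizing a f g with
  | zero =>
    simp only [run, Option.some.injEq] at h
    rw [zero_add, resultant_zero_right_deg, P_coeff, h]; simp
  | succ n ih =>
    simp only [run, fz_eq] at h
    split at h
    swap
    · simp at h
    rename_i hc
    simp only [Bool.and_eq_true, decide_eq_true_eq] at hc
    obtain ⟨⟨⟨hc1, hc0⟩, hr⟩, hl⟩ := hc
    have H := chk_eq _ _ _ hc1
    rw [comb_eq _ _ _ _ _ _ hl] at H
    have ih' := ih _ _ _ hg hr h
    generalize divAll _ _ _ = r at *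
    set c := g.getD (n+1) 0 with hcdef
    generalize c * f.getD (n+2) 0 = q1 at *
    generalize c * f.getD (n+1) 0 - _ = q0 at *
    have hgd := P_deg g (n+1) hg
    have hrd := P_deg r n hr
    have e1 : C (c*c) * P f = C (a*a) * P r + P g * (C q1 * X + C q0) := by
      rw [← H]; simp only [map_zero]; ring
    have e2 : resultant (C (c*c) * P f) (P g) (n+1+1) (n+1)
        = resultant (C (a*a) * P r) (P g) (n+1+1) (n+1) := by
      rw [e1, resultant_add_mul_left _ _ _ _ _ _ hgd]
      have := natDegree_linear_le (a := q1) (b := q0)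
      omega
    rw [resultant_C_mul_left, resultant_C_mul_left,
      show n+1+1 = n+2 from rfl, resultant_add_left_deg (P r) (P g) n (n+1) 2 hrd,
      resultant_comm (P r), ih', P_coeff, ← hcdef] at e2
    have s1 : (-1:ℤ) ^ ((n+1)*2) = 1 := by rw [mul_comm, pow_mul]; simp
    have s2 : (-1:ℤ) ^ (n*(n+1)) = 1 := (Nat.even_mul_succ_self n).neg_one_pow
    rw [s1, s2] at e2
    have hp : (c*c)^(n+1) ≠ 0 := pow_ne_zero _ (mul_ne_zero hc0 hc0)
    apply mul_left_cancel₀ hp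
    rw [show n+1+1 = n+2 from rfl, e2]
    ring

def qs : List ℤ := [-261910751, 2363203645, 2573924261, -2555610007, 4054490087, -1463296732, -7068248851, 17713731976, -27316581262, 35730188833, -40888329774, 40034881756, -33394267804, 23992472995, -15020495335, 8240756348, -3929042061, 1602112888, -545068137, 149069425, -30157709, 3161522, 599981, -437871, 142158, -33002, 6003, -899, 116, -13, 1]
def dqs : List ℤ := [2363203645, 5147848522, -7666830021, 16217960348, -7316483660, -42409493106, 123996123832, -218532650096, 321571699497, -408883297740, 440383699316, -400731213648, 311902148935, -210286934690, 123611345220, -62864672976, 27235919096, -9811226466, 2832319075, -603154180, 66391962, 13199582, -10071033, 3411792, -825050, 156078, -24273, 3248, -377, 30]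
def rr : ℤ := -7587762080067653183908482186424796014066724968101489997876207511423235879040790511163783981732061942750680128630643848654007930894868310473435295993995599580527486861521085
def mm : ℤ := 45937283904756196654924212036222873897674963644506039115505954412242140194074909307290566805230395183541673246966886529017707872923422342277633921430675228785458902437662433

set_option maxRecDepth 100000 in
lemma run_qs : run 29 1 qs dqs = some (-(29^43 * (361*mm)^2)) := by decide +kernel

lemma r_root : (qs.foldr (fun a x => a + rr * x) 0) % mm^2 = 0 := by decide +kernel
lemma r_root' : (dqs.foldr (fun a x => a + rr * x) 0) % mm = 0 := by decide +kernel

lemma norm_res {L : Type} [Field L] [Algebra ℚ L] (pb : PowerBasis ℚ L) (g : ℚ[X]) (n : ℕ)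
    (hg : g.natDegree ≤ n) :
    Algebra.norm ℚ (aeval pb.gen g) =
      resultant (minpoly ℚ pb.gen) g (minpoly ℚ pb.gen).natDegree n := by
  have := pb.finite
  have : CharZero L := algebraRat.charZero L
  let E := AlgebraicClosure L
  classical
  apply (algebraMap ℚ E).injective
  have hmon := minpoly.monic pb.isIntegral_gen
  have hsep : IsSeparable ℚ pb.gen := Algebra.IsSeparable.isSeparable ℚ pb.gen
  rw [Algebra.norm_eq_prod_embeddings, ← resultant_map_map,
    ← hmon.natDegree_map (algebraMap ℚ E),
    resultant_eq_prod_eval _ _ _ (natDegree_map_le.trans hg) (IsAlgClosed.splits _),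
    (hmon.map _).leadingCoeff, one_pow, one_mul]
  rw [Fintype.prod_equiv pb.liftEquiv' (fun σ : L →ₐ[ℚ] E => σ (aeval pb.gen g))
    (fun x => (g.map (algebraMap ℚ E)).eval x.1) ?_]
  · rw [Finset.prod_mem_multiset (((minpoly ℚ pb.gen).map (algebraMap ℚ E)).roots) _
      (fun x => (g.map (algebraMap ℚ E)).eval x) (by intros; rfl),
      Finset.prod_eq_multiset_prod, Multiset.toFinset_val,
      Multiset.dedup_eq_self.mpr]
    exact nodup_roots (.map hsep)
  · intro σ
    simp only [PowerBasis.liftEquiv'_apply_coe]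
    rw [← aeval_algHom_apply, eval_map_algebraMap]

lemma int_quad {K : Type} [Field K] (b p q : K) (hp : IsIntegral ℤ p)
    (hq : IsIntegral ℤ q) (h : b ^ 2 = p * b + q) : IsIntegral ℤ b := by
  let R := integralClosure ℤ K
  have h1 : IsIntegral R b := by
    refine ⟨X ^ 2 - C (⟨p, hp⟩ : R) * X - C (⟨q, hq⟩ : R), ?_, ?_⟩
    · rw [sub_sub]
      apply monic_X_pow_sub
      compute_degree!
    · simp only [eval₂_sub, eval₂_mul, eval₂_X_pow, eval₂_C, eval₂_X, h]
      change p * b + q - p * b - q = 0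
      ring
  exact isIntegral_trans b h1

lemma int_div {K : Type} [Field K] [CharZero K] (θ : K) (F h G C' A B : ℤ[X]) (N : ℤ)
    (hN : N ≠ 0) (hθ : IsIntegral ℤ θ) (h0 : aeval θ F = 0)
    (h1 : F = h * G + C N ^ 2 * C') (h2 : G = h * A + C N * B) :
    ∃ b : K, IsIntegral ℤ b ∧ (N : K) * b = aeval θ G := by
  have hN' : (N : K) ≠ 0 := by exact_mod_cast hN
  have hi : ∀ p : ℤ[X], IsIntegral ℤ (aeval θ p) := fun p => 
    adjoin_le_integralClosure hθ (aeval_mem_adjoin_singleton ℤ θ)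
  refine ⟨aeval θ G / N, ?_, by field_simp⟩
  apply int_quad _ (aeval θ B) (- (aeval θ A * aeval θ C')) (hi _) ((hi _).mul (hi _)).neg
  have e1 : aeval θ h * aeval θ G + (N:K)^2 * aeval θ C' = 0 := by
    rw [← h0, h1]; simp
  have e2 : aeval θ G = aeval θ h * aeval θ A + N * aeval θ B := by
    conv_lhs => rw [h2]
    simp
  field_simp
  linear_combination (aeval θ G) * e2 + (aeval θ A) * e1

lemma discr_mon {R : Type} [CommRing R] (y : R) (n : ℕ) (g : Fin n → ℤ[X])
    (hm : ∀ i, (g i).Monic) (hd : ∀ i, (g i).natDegree = i) (b : Fin n → R) (N : Fin n → ℤ)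
    (h : ∀ i, (N i : R) * b i = aeval y (g i)) :
    (∏ i, N i) ^ 2 * Algebra.discr ℤ b = Algebra.discr ℤ (fun i : Fin n => y ^ (i:ℕ)) := by
  classical
  let U : Matrix (Fin n) (Fin n) ℤ := fun i j => (g i).coeff j
  have hU : U.det = 1 := by
    rw [Matrix.det_of_isLowerTriangular]
    · apply Finset.prod_eq_one
      intro i _
      change (g i).coeff i = 1
      have := (hm i).coeff_natDegree
      rwa [hd] at this
    · intro i j hij
      apply coeff_eq_zero_of_natDegree_lt
      rw [hd]
      exact hij
  have e : (U.map (algebraMap ℤ R)).mulVec (fun i : Fin n => y ^ (i:ℕ)) =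
      ((Matrix.diagonal N).map (algebraMap ℤ R)).mulVec b := by
    ext i
    have : ((Matrix.diagonal N).map (algebraMap ℤ R)).mulVec b i = (N i : R) * b i := by
      rw [Matrix.diagonal_map (map_zero _), Matrix.mulVec_diagonal]
      simp
    rw [this, h, aeval_eq_sum_range' (n := n) (by rw [hd]; exact i.2), Finset.sum_range]
    simp [Matrix.mulVec, dotProduct, U]
    rfl
  have e1 := Algebra.discr_of_matrix_mulVec (A := ℤ) (fun i : Fin n => y ^ (i:ℕ)) U
  have e2 := Algebra.discr_of_matrix_mulVec (A := ℤ) b (Matrix.diagonal N)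
  rw [e, e2, hU, Matrix.det_diagonal] at e1
  rw [e1]; ring


instance : Fact (Nat.Prime 29) := ⟨by norm_num⟩

lemma local29 (f : (ZMod 29)[X]) (h0 : f ≠ 0) (hd : f.natDegree < 30) :
    ∃ S T : (ZMod 29)[X],
      f * S = (X - C 4)^28 * (X - C 13) + ((X - C 4)^29 * (X - C 13)) * T ∨
      f * S = (X - C 4)^29 + ((X - C 4)^29 * (X - C 13)) * T := by
  classical
  set a : (ZMod 29)[X] := X - C 4 with ha
  set b : (ZMod 29)[X] := X - C 13 with hb
  have hia : Irreducible a := irreducible_X_sub_C 4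
  have hib : Irreducible b := irreducible_X_sub_C 13
  have hQd : (a^29*b).natDegree = 30 := by
    rw [natDegree_mul (pow_ne_zero _ hia.ne_zero) hib.ne_zero, natDegree_pow, ha, hb,
      natDegree_X_sub_C, natDegree_X_sub_C]
  obtain ⟨e, he⟩ := EuclideanDomain.gcd_dvd_right f (a^29*b)
  have hbez := EuclideanDomain.gcd_eq_gcd_ab f (a^29*b)
  have hdf := EuclideanDomain.gcd_dvd_left f (a^29*b)
  set d := EuclideanDomain.gcd f (a^29*b)
  set x := EuclideanDomain.gcdA f (a^29*b)
  set y := EuclideanDomain.gcdB f (a^29*b)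
  have hQ0 : a^29*b ≠ 0 := mul_ne_zero (pow_ne_zero _ hia.ne_zero) hib.ne_zero
  have hne : ¬ IsUnit e := by
    intro hu
    have h1 : a^29*b ∣ f := by
      rw [he]
      exact (hu.mul_right_dvd).2 hdf
    have := natDegree_le_of_dvd h1 h0
    omega
  have he0 : e ≠ 0 := by
    rintro rfl
    rw [mul_zero] at he
    exact hQ0 he
  obtain ⟨π, hπ, hπe⟩ := WfDvdMonoid.exists_irreducible_factor hne he0
  have hπQ : π ∣ a^29*b := by rw [he]; exact hπe.mul_left d
  rcases hπ.prime.dvd_or_dvd hπQ with h | h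
  · have h' := hπ.prime.dvd_of_dvd_pow h
    obtain ⟨e', rfl⟩ := ((hπ.dvd_symm hia) h').trans hπe
    refine ⟨x * e', -(y * e'), Or.inl ?_⟩
    have : a^28*b = d * e' := by
      apply mul_left_cancel₀ hia.ne_zero
      linear_combination he
    rw [this, hbez]
    ring
  · obtain ⟨e', rfl⟩ := ((hπ.dvd_symm hib) h).trans hπe
    refine ⟨x * e', -(y * e'), Or.inr ?_⟩
    have : a^29 = d * e' := by
      apply mul_left_cancel₀ hib.ne_zero
      linear_combination he
    nth_rewrite 1 [this]
    rw [hbez]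
    ring

lemma lift29 {p : ℤ[X]} (h : p.map (Int.castRingHom (ZMod 29)) = 0) : ∃ u, p = C 29 * u := by
  have : C 29 ∣ p := by
    rw [C_dvd_iff_dvd_coeff]
    intro i
    have := congrArg (fun q => coeff q i) h
    simp only [coeff_map, coeff_zero, eq_intCast] at this
    exact (ZMod.intCast_zmod_eq_zero_iff_dvd _ 29).1 this
  exact this

lemma ring29 {R : Type} [CommRing R] (y z : R) (F f : ℤ[X]) (h0 : aeval y F = 0)
    (hF : F.map (Int.castRingHom (ZMod 29)) = (X - C 4)^29 * (X - C 13))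
    (hf : f.map (Int.castRingHom (ZMod 29)) ≠ 0) (hd : f.natDegree < 30)
    (hz : 29 * z = aeval y f) :
    ∃ z' : R, 29 * z' = (y-4)^28*(y-13) ∨ 29 * z' = (y-4)^29 := by
  obtain ⟨S, T, h⟩ := local29 _ hf (natDegree_map_le.trans_lt hd)
  have hs : Function.Surjective (Polynomial.map (Int.castRingHom (ZMod 29))) :=
    map_surjective _ (ZMod.intCast_surjective)
  obtain ⟨S, rfl⟩ := hs S
  obtain ⟨T, rfl⟩ := hs T
  rw [← hF] at h
  rcases h with h | h
  · have : (f * S - ((X - C 4)^28 * (X - C 13) + F * T)).map (Int.castRingHom (ZMod 29)) = 0 := by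
      simp only [Polynomial.map_sub, Polynomial.map_mul, Polynomial.map_add, Polynomial.map_pow,
        map_X, map_C, h]
      simp
    obtain ⟨u, hu⟩ := lift29 this
    have hu' := congrArg (aeval y) hu
    simp only [map_sub, map_mul, map_add, map_pow, aeval_X, aeval_C, h0, ← hz] at hu'
    refine ⟨z * aeval y S - aeval y u, Or.inl ?_⟩
    simp only [map_ofNat, zero_mul, add_zero] at hu'
    linear_combination hu'
  · have : (f * S - ((X - C 4)^29 + F * T)).map (Int.castRingHom (ZMod 29)) = 0 := by
      simp only [Polynomial.map_sub, Polynomial.map_mul, Polynomial.map_add, Polynomial.map_pow,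
        map_X, map_C, h]
      simp
    obtain ⟨u, hu⟩ := lift29 this
    have hu' := congrArg (aeval y) hu
    simp only [map_sub, map_mul, map_add, map_pow, aeval_X, aeval_C, h0, ← hz] at hu'
    refine ⟨z * aeval y S - aeval y u, Or.inr ?_⟩
    simp only [map_ofNat, zero_mul, add_zero] at hu'
    linear_combination hu'

/-! explicit polynomials -/
def cong29 : List ℤ → List ℤ → Bool
  | [], [] => true
  | a :: l, b :: m => decide ((a - b) % 29 = 0) && cong29 l m
  | _, _ => false

lemma cong29_eq (l m : List ℤ) (h : cong29 l m = true) :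
    (P l).map (Int.castRingHom (ZMod 29)) = (P m).map (Int.castRingHom (ZMod 29)) := by
  induction l generalizing m with
  | nil => cases m with
    | nil => rfl
    | cons b m => simp [cong29] at h
  | cons a l ih => cases m with
    | nil => simp [cong29] at h
    | cons b m =>
      simp only [cong29, Bool.and_eq_true, decide_eq_true_eq] at h
      have e : ((a:ℤ) : ZMod 29) = b := by
        rw [← sub_eq_zero, ← Int.cast_sub]
        exact (ZMod.intCast_zmod_eq_zero_iff_dvd _ 29).2 (Int.dvd_of_emod_eq_zero h.1)
      have e' : Int.castRingHom (ZMod 29) a = Int.castRingHom (ZMod 29) b := e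
      rw [P, P, Polynomial.map_add, Polynomial.map_add, Polynomial.map_mul, Polynomial.map_mul,
        Polynomial.map_C, Polynomial.map_C, ih _ h.2, e']

lemma qs29 : (P qs).map (Int.castRingHom (ZMod 29)) = (X - C 4)^29 * (X - C 13) := by
  rw [cong29_eq qs [52,-4,0,0,0,0,0,0,0,0,0,0,0,0,0,0,0,0,0,0,0,0,0,0,0,0,0,0,0,-13,1]
    (by decide +kernel), sub_pow_char, ← C_pow, ZMod.pow_card]
  have h4 : (C 4 : (ZMod 29)[X]) = 4 := map_ofNat C 4
  have h13 : (C 13 : (ZMod 29)[X]) = 13 := map_ofNat C 13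
  rw [h4, h13]
  simp [P]
  ring

lemma P_eval (l : List ℤ) (x : ℤ) : (P l).eval x = l.foldr (fun a s => a + x * s) 0 := by
  induction l with
  | nil => simp [P]
  | cons a l ih => simp [P, ih]

lemma Q_eq : (P qs).map (Int.castRingHom ℚ) = Q := by
  simp [P, qs, Q]
  ring

lemma dqs_eq : derivative (P qs) = P dqs := by
  simp [P, qs, dqs]
  ring

def g19 : List ℤ := [175, 135, -90, 93, -71, -125, 73, 139, -101, -64, 178, -96, -128, 179, 69, -157, -36, 141, 66, -41, 178, 163, 53, 155, -147, -22, -50, -22, 1]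
def c19 : List ℤ := [-725516, 6546265, 7129981, -7079251, 11231273, -4053451, -19579634, 49068507, -75669203, 98975595, -113264071, 110899946, -92504894, 66461146, -41608025, 22827579, -10883769, 4437986, -1509888, 412933, -83540, 8752, 1657, -1216, 391, -88, 18, -1, 1, 0, 0]
def a19 : List ℤ := [-5, 3, 7, 9, 4, -6, 3, -5, -7, -5, 7, -7, -5, 1, 9, 9, -4, -1, 1, 9, -6, 6, 8, -6, -2, 7, 1]
def b19 : List ℤ := [10, 9, -7, 0, -9, -8, 6, 7, -2, 1, 11, -7, -3, 12, 2, -14, -6, 9, 4, -4, 6, 10, -1, 5, -5, -1, -6, -2, 0]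

lemma e19 : P qs = (X^2+9*X+3) * P g19 + C 19 ^ 2 * P c19 := by
  simp [P, qs, g19, c19]
  ring
lemma e19' : P g19 = (X^2+9*X+3) * P a19 + C 19 * P b19 := by
  simp [P, a19, g19, b19]
  ring

lemma monic_of (l : List ℤ) (n : ℕ) (h : l.length ≤ n+1) (h1 : l.getD n 0 = 1) :
    (P l).Monic ∧ (P l).natDegree = n := by
  have h2 := P_deg l n h
  have h3 : (P l).coeff n = 1 := by rw [P_coeff, h1]
  exact ⟨monic_of_natDegree_le_of_coeff_eq_one n h2 h3,
    natDegree_eq_of_le_of_coeff_ne_zero h2 (by rw [h3]; exact one_ne_zero)⟩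

lemma er : ∃ G C' A B : ℤ[X], G.Monic ∧ G.natDegree = 29 ∧
    P qs = (X - C rr) * G + C mm ^ 2 * C' ∧ G = (X - C rr) * A + C mm * B := by
  obtain ⟨hm, hd⟩ := monic_of qs 30 (by decide) (by decide)
  have h1 := modByMonic_add_div (P qs) (X - C rr)
  have h2 := modByMonic_add_div (P qs /ₘ (X - C rr)) (X - C rr)
  rw [modByMonic_X_sub_C_eq_C_eval] at h1 h2
  set G := P qs /ₘ (X - C rr) with hG
  have hGd : G.natDegree = 29 := by
    rw [hG, natDegree_divByMonic _ (monic_X_sub_C rr), hd, natDegree_X_sub_C]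
  have hGm : G.Monic := by
    have h3 : ((X - C rr) * G).Monic := by
      have : (X - C rr) * G = P qs - C (eval rr (P qs)) := by rw [← h1]; simp
      rw [this]
      apply hm.sub_of_left
      rw [degree_eq_natDegree hm.ne_zero, hd]
      exact lt_of_le_of_lt degree_C_le (by norm_num)
    exact (monic_X_sub_C rr).of_mul_monic_left h3
  have hGr : G.eval rr = (P dqs).eval rr := by
    rw [← dqs_eq, ← h1]
    simp
  obtain ⟨c, hc⟩ := Int.dvd_of_emod_eq_zero r_root
  obtain ⟨b, hb⟩ := Int.dvd_of_emod_eq_zero r_root'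
  refine ⟨G, C c, G /ₘ (X - C rr), C b, hGm, hGd, ?_, ?_⟩
  · rw [← C_pow, ← C_mul, ← hc, ← P_eval]
    nth_rewrite 1 [← h1]
    ring
  · rw [← C_mul, ← hb, ← P_eval, ← hGr]
    nth_rewrite 1 [← h2]
    ring

open NumberField in
lemma discr_coe {K : Type} [Field K] [NumberField K] (n : ℕ) (b : Fin n → 𝓞 K) :
    ((Algebra.discr ℤ b : ℤ) : ℚ) = Algebra.discr ℚ (fun i => (b i : K)) := by
  rw [Algebra.discr_def, Algebra.discr_def, ← eq_intCast (Int.castRingHom ℚ), RingHom.map_det]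
  congr 1
  ext i j
  simp only [RingHom.mapMatrix_apply, Matrix.map_apply, Algebra.traceMatrix_apply,
    Algebra.traceForm_apply, eq_intCast, Algebra.coe_trace_int, map_mul]

def NN (i : Fin 30) : ℤ := if i = 28 then 19 else if i = 29 then 19 * mm else 1

lemma NN_prod : ∏ i, NN i = 361 * mm := by decide +kernel
lemma uv : 15 * mm + 19 * (-36266276766912786832834904239123321498164444982504767722767858746506952784795981032071500109392417250164478879184384101856085162834280796534974148497901496409572817713944026) = 1 := by decide +kernel

open NumberField in
theorem main {K : Type} [Field K] [NumberField K] (θ : K) (hQ : Irreducible Q)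
    (h0 : eval₂ (algebraMap ℚ K) θ Q = 0)
    (hgen : ∀ x : K, ∃ p : ℚ[X], eval₂ (algebraMap ℚ K) θ p = x) :
    NumberField.discr K = 29 ^ 43 := by
  obtain ⟨hFm, hFd⟩ := monic_of qs 30 (by decide) (by decide)
  have hQm : Q.Monic := by rw [← Q_eq]; exact hFm.map _
  have hQd : Q.natDegree = 30 := by
    rw [← Q_eq, hFm.natDegree_map, hFd]
  have hmin : minpoly ℚ θ = Q :=
    (minpoly.eq_of_irreducible_of_monic hQ h0 hQm).symm
  have hintQ : IsIntegral ℚ θ := ⟨Q, hQm, h0⟩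
  have hF0 : aeval θ (P qs) = 0 := by
    have hc : (algebraMap ℚ K).comp (Int.castRingHom ℚ) = algebraMap ℤ K :=
      Subsingleton.elim _ _
    rw [← Q_eq, eval₂_map, hc] at h0
    exact h0
  have hint : IsIntegral ℤ θ := ⟨P qs, hFm, hF0⟩
  have hadj : Algebra.adjoin ℚ {θ} = ⊤ := by
    rw [eq_top_iff]
    rintro x -
    obtain ⟨p, rfl⟩ := hgen x
    exact aeval_mem_adjoin_singleton ℚ θ
  obtain ⟨pb, hpb⟩ : ∃ pb : PowerBasis ℚ K, pb.gen = θ :=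
    ⟨PowerBasis.ofAdjoinEqTop hintQ hadj, PowerBasis.ofAdjoinEqTop_gen hintQ hadj⟩
  have hdim : pb.dim = 30 := by rw [← pb.natDegree_minpoly, hpb, hmin, hQd]
  have hfin : Module.finrank ℚ K = 30 := by rw [pb.finrank, hdim]
  have hfinZ : Module.finrank ℤ (𝓞 K) = 30 := by rw [RingOfIntegers.rank, hfin]
  let y : 𝓞 K := ⟨θ, hint⟩
  have hy : (y : K) = θ := rfl
  have hyp : ∀ p : ℤ[X], algebraMap (𝓞 K) K (aeval y p) = aeval θ p := by
    intro p
    exact (aeval_algebraMap_apply K y p).symm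
  have hyF : aeval y (P qs) = 0 := by
    apply RingOfIntegers.coe_injective
    rw [hyp, hF0, map_zero]
  -- norms
  have hnorm : ∀ a : ℤ, Algebra.norm ℤ (y - a) = (P qs).eval a := by
    intro a
    have h1 := norm_res pb (X - C (a:ℚ)) 1 (by rw [natDegree_X_sub_C])
    rw [resultant_X_sub_C_right _ _ _ le_rfl, hpb, hmin, hQd, ← Q_eq, eval_intCast_map] at h1
    have h2 : ((Algebra.norm ℤ (y - a) : ℤ) : ℚ) = ((P qs).eval a : ℤ) := by
      rw [Algebra.coe_norm_int]
      have : ((y - (a : 𝓞 K) : 𝓞 K) : K) = aeval θ (X - C (a:ℚ)) := by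
        simp [hy]
      rw [this, h1, Even.neg_one_pow (by decide), one_mul]
      simp
    exact_mod_cast h2
  -- discriminant of the power basis
  set w : Fin 30 → 𝓞 K := fun i => y ^ (i:ℕ) with hw
  have hdw : Algebra.discr ℤ w = 29^43 * (361*mm)^2 := by
    have h1 := Algebra.discr_powerBasis_eq_norm ℚ pb
    rw [norm_res pb _ 29 (by
      rw [hpb, hmin]
      exact (natDegree_derivative_le _).trans (by rw [hQd])), hpb, hmin, hQd, ← Q_eq,
      derivative_map, dqs_eq, resultant_map_map,
      run_eq 29 1 qs dqs _ (by decide) (by decide) run_qs, hfin] at h1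
    have h2 : ((Algebra.discr ℤ w : ℤ) : ℚ) = Algebra.discr ℚ pb.basis := by
      rw [discr_coe, ← Algebra.discr_reindex ℚ pb.basis (finCongr hdim)]
      have hc : (fun i => ((w i : 𝓞 K) : K)) = pb.basis ∘ (finCongr hdim).symm := by
        funext i
        simp [hw, hpb, hy]
      rw [hc]
    rw [h1] at h2
    have h3 : ((Algebra.discr ℤ w : ℤ) : ℚ) = ((29^43 * (361*mm)^2 : ℤ) : ℚ) := by
      rw [h2]
      push_cast
      norm_num
    exact_mod_cast h3
  -- integral elements
  obtain ⟨x1, hx1, hx1'⟩ := int_div θ _ _ _ _ _ _ 19 (by norm_num) hint hF0 e19 e19'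
  obtain ⟨G, C', A, B, hGm, hGd, hG1, hG2⟩ := er
  obtain ⟨x2, hx2, hx2'⟩ := int_div θ _ _ _ _ _ _ mm (by decide) hint hF0 hG1 hG2
  obtain ⟨hgm, hgd⟩ := monic_of g19 28 (by decide) (by decide)
  let z1 : 𝓞 K := ⟨x1, hx1⟩
  let z2 : 𝓞 K := ⟨x2, hx2⟩
  have hz1 : (19 : 𝓞 K) * z1 = aeval y (P g19) := by
    apply RingOfIntegers.coe_injective
    rw [hyp, ← hx1', map_mul]
    rw [map_ofNat]
    exact congrArg (· * x1) (Int.cast_ofNat 19).symm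
  have hz2 : (mm : 𝓞 K) * z2 = aeval y G := by
    apply RingOfIntegers.coe_injective
    rw [hyp, ← hx2', map_mul]
    rw [map_intCast]
    rfl
  let b : Fin 30 → 𝓞 K := fun i => if i = 28 then z1 else
    if i = 29 then (15 : ℤ) * (y * z1) + (-36266276766912786832834904239123321498164444982504767722767858746506952784795981032071500109392417250164478879184384101856085162834280796534974148497901496409572817713944026 : ℤ) * z2 else y ^ (i:ℕ)
  let g : Fin 30 → ℤ[X] := fun i => if i = 28 then P g19 else
    if i = 29 then C (15 * mm) * (X * P g19) + C (19 * (-36266276766912786832834904239123321498164444982504767722767858746506952784795981032071500109392417250164478879184384101856085162834280796534974148497901496409572817713944026)) * G else X ^ (i:ℕ)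
  have hgg : ∀ i, (g i).Monic ∧ (g i).natDegree = i := by
    intro i
    simp only [g]
    split_ifs with h1 h2
    · subst h1; exact ⟨hgm, hgd⟩
    · subst h2
      have c29 : (C (15 * mm) * (X * P g19) + C (19 * (-36266276766912786832834904239123321498164444982504767722767858746506952784795981032071500109392417250164478879184384101856085162834280796534974148497901496409572817713944026)) * G).coeff 29 = 1 := by
        have e1 : (P g19).coeff 28 = 1 := by rw [← hgd]; exact hgm
        have e2 : G.coeff 29 = 1 := by rw [← hGd]; exact hGm
        rw [coeff_add, coeff_C_mul, coeff_C_mul, coeff_X_mul, e1, e2, mul_one, mul_one, uv]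
      have d29 : (C (15 * mm) * (X * P g19) + C (19 * (-36266276766912786832834904239123321498164444982504767722767858746506952784795981032071500109392417250164478879184384101856085162834280796534974148497901496409572817713944026)) * G).natDegree ≤ 29 := by
        refine natDegree_add_le_of_degree_le ?_ ?_
        · refine (natDegree_C_mul_le _ _).trans ?_
          rw [natDegree_X_mul hgm.ne_zero, hgd]
        · exact (natDegree_C_mul_le _ _).trans hGd.le
      exact ⟨monic_of_natDegree_le_of_coeff_eq_one 29 d29 c29,
        natDegree_eq_of_le_of_coeff_ne_zero d29 (c29.trans_ne one_ne_zero)⟩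
    · exact ⟨monic_X_pow _, natDegree_X_pow _⟩
  have hbg : ∀ i, (NN i : 𝓞 K) * b i = aeval y (g i) := by
    intro i
    simp only [g, b, NN]
    split_ifs with h1 h2
    · rw [← hz1]; push_cast; rfl
    · simp only [map_add, map_mul, aeval_X, aeval_C, ← hz1, ← hz2]
      simp only [eq_intCast]
      push_cast
      ring
    · simp
  have hdb := discr_mon y 30 g (fun i => (hgg i).1) (fun i => (hgg i).2) b NN hbg
  rw [NN_prod] at hdb
  have hm0 : (361 * mm : ℤ) ≠ 0 := by decide
  have hdb' : Algebra.discr ℤ b = 29^43 := by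
    apply mul_left_cancel₀ (pow_ne_zero 2 hm0)
    rw [hdb]
    change Algebra.discr ℤ w = _
    rw [hdw]; ring
  -- integral basis
  let ω : Module.Basis (Fin 30) ℤ (𝓞 K) :=
    (RingOfIntegers.basis K).reindex (Fintype.equivFinOfCardEq (by
      rw [← hfinZ, Module.finrank_eq_card_basis (RingOfIntegers.basis K)]))
  have hω : ∀ v : Fin 30 → 𝓞 K, Algebra.discr ℤ v = (ω.toMatrix v).det ^ 2 * discr K := by
    intro v
    rw [← discr_eq_discr K ω, ← Algebra.discr_of_matrix_vecMul, ω.toMatrix_map_vecMul]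
  have hb2 := hω b
  have hw2 := hω w
  rw [hdb'] at hb2
  rw [hdw] at hw2
  set d := (ω.toMatrix b).det
  -- maximality at 29
  have hp29 : Prime (29:ℤ) := Int.prime_iff_natAbs_prime.2 (by norm_num)
  have hP : ¬ (29:ℤ) ∣ (ω.toMatrix w).det := by
    intro hdvd
    have hdet : ((ω.toMatrix w).map (Int.castRingHom (ZMod 29))).det = 0 := by
      have := (Int.castRingHom (ZMod 29)).map_det (ω.toMatrix w)
      rw [RingHom.mapMatrix_apply] at this
      rw [← this]
      exact (ZMod.intCast_zmod_eq_zero_iff_dvd _ 29).2 hdvd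
    obtain ⟨v, hv0, hv⟩ := Matrix.exists_mulVec_eq_zero_iff.2 hdet
    choose V hV using fun i => ZMod.intCast_surjective (v i)
    have hcoord : ∀ i, (29:ℤ) ∣ ∑ j, ω.toMatrix w i j * V j := by
      intro i
      apply (ZMod.intCast_zmod_eq_zero_iff_dvd _ 29).1
      have := congrFun hv i
      simp only [Matrix.mulVec, dotProduct, Matrix.map_apply, eq_intCast, ← hV,
        Pi.zero_apply] at this
      push_cast
      exact this
    choose c hc using hcoord
    let f : ℤ[X] := ∑ j : Fin 30, C (V j) * X ^ (j:ℕ)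
    have hfy : aeval y f = ∑ j, V j • w j := by
      simp [f, hw]
    have hz : 29 * (∑ i, c i • ω i) = aeval y f := by
      rw [hfy]
      have : ∀ j, w j = ∑ i, ω.toMatrix w i j • ω i := fun j => (ω.sum_toMatrix_smul_self w j).symm
      conv_rhs => enter [2, j]; rw [this j, Finset.smul_sum]
      rw [Finset.sum_comm, Finset.mul_sum]
      refine Finset.sum_congr rfl fun i _ => ?_
      have h2 : ∀ j, V j • ω.toMatrix w i j • ω i = (ω.toMatrix w i j * V j) • ω i := by
        intro j; rw [smul_smul, mul_comm]
      simp_rw [h2]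
      rw [← Finset.sum_smul, hc, mul_smul]
      simp
    have hfc : ∀ j : Fin 30, f.coeff j = V j := by
      intro j
      simp only [f, finsetSum_coeff, coeff_C_mul_X_pow]
      rw [Finset.sum_eq_single j]
      · simp
      · intro k _ hk
        rw [if_neg]
        intro h; exact hk (Fin.ext h.symm)
      · simp
    have hf : f.map (Int.castRingHom (ZMod 29)) ≠ 0 := by
      intro h
      apply hv0
      ext j
      have := congrArg (fun q => coeff q (j:ℕ)) h
      simp only [coeff_map, hfc, coeff_zero, eq_intCast, hV] at this
      exact this
    have hfd : f.natDegree < 30 := by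
      refine Nat.lt_succ_of_le (natDegree_sum_le_of_forall_le _ _ fun j _ => ?_)
      exact (natDegree_C_mul_X_pow_le _ _).trans (Nat.le_of_lt_succ j.2)
    obtain ⟨z', hz'⟩ := ring29 y _ _ f hyF qs29 hf hfd hz
    have n29 : Algebra.norm ℤ (29 : 𝓞 K) = 29^30 := by
      have := Algebra.norm_algebraMap (R := ℤ) (S := 𝓞 K) 29
      rw [hfinZ] at this
      simpa using this
    have n4 := hnorm 4
    have n13 := hnorm 13
    rw [P_eval] at n4 n13
    obtain ⟨u4, hu4, hu4'⟩ : ∃ u : ℤ, (qs.foldr (fun a s => a + 4 * s) 0) = 29 * u ∧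
        ¬ (29:ℤ) ∣ u := ⟨(qs.foldr (fun a s => a + 4 * s) 0) / 29, by decide +kernel,
          by decide +kernel⟩
    obtain ⟨u13, hu13, hu13'⟩ : ∃ u : ℤ, (qs.foldr (fun a s => a + 13 * s) 0) = 29 * u ∧
        ¬ (29:ℤ) ∣ u := ⟨(qs.foldr (fun a s => a + 13 * s) 0) / 29, by decide +kernel,
          by decide +kernel⟩
    rw [hu4] at n4
    rw [hu13] at n13
    push_cast at n4 n13
    rcases hz' with h | h
    · have h' := congrArg (Algebra.norm ℤ) h
      rw [map_mul, map_mul, map_pow, n29, n4, n13] at h'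
      have h3 : 29 * Algebra.norm ℤ z' = u4^28 * u13 := by
        apply mul_left_cancel₀ (pow_ne_zero 29 hp29.ne_zero)
        linear_combination h'
      rcases hp29.dvd_or_dvd (Dvd.intro _ h3) with h | h
      · exact hu4' (hp29.dvd_of_dvd_pow h)
      · exact hu13' h
    · have h' := congrArg (Algebra.norm ℤ) h
      rw [map_mul, map_pow, n29, n4] at h'
      have h3 : 29 * Algebra.norm ℤ z' = u4^29 := by
        apply mul_left_cancel₀ (pow_ne_zero 29 hp29.ne_zero)
        linear_combination h'
      exact hu4' (hp29.dvd_of_dvd_pow (Dvd.intro _ h3))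
  have hd29 : ¬ (29:ℤ) ∣ d := by
    rintro ⟨k, hk⟩
    apply hP
    apply hp29.dvd_of_dvd_pow (n := 2)
    have : (ω.toMatrix w).det ^ 2 = (361*mm)^2 * d^2 := by
      apply mul_right_cancel₀ (discr_ne_zero K)
      rw [← hw2, hb2]; ring
    rw [this, hk]
    exact ⟨(361*mm)^2 * (29 * k^2), by ring⟩
  have hcop : IsCoprime (d^2) ((29:ℤ)^43) :=
    ((hp29.coprime_iff_not_dvd.2 hd29).symm).pow
  have hunit : IsUnit (d^2) := hcop.isUnit_of_dvd' dvd_rfl (Dvd.intro _ hb2.symm)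
  have hd1 : d^2 = 1 := by
    rcases Int.isUnit_iff.1 hunit with h | h
    · exact h
    · nlinarith [sq_nonneg d]
  rw [hd1, one_mul] at hb2
  exact hb2.symm

end DQ

theorem discr_Q (hQ : Irreducible Q) :
    haveI : Fact (Irreducible Q) := ⟨hQ⟩
    haveI : CharZero (AdjoinRoot Q) :=
      charZero_of_injective_algebraMap (algebraMap ℚ (AdjoinRoot Q)).injective
    haveI : FiniteDimensional ℚ (AdjoinRoot Q) :=
      (AdjoinRoot.powerBasis hQ.ne_zero).finite
    haveI : NumberField (AdjoinRoot Q) := ⟨⟩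
    NumberField.discr (AdjoinRoot Q) = 29 ^ 43 := by
  have : Fact (Irreducible Q) := ⟨hQ⟩
  have : CharZero (AdjoinRoot Q) :=
    charZero_of_injective_algebraMap (algebraMap ℚ (AdjoinRoot Q)).injective
  have : FiniteDimensional ℚ (AdjoinRoot Q) :=
    (AdjoinRoot.powerBasis hQ.ne_zero).finite
  have : NumberField (AdjoinRoot Q) := ⟨⟩
  refine DQ.main (AdjoinRoot.root Q) hQ ?_ ?_
  · rw [Subsingleton.elim (algebraMap ℚ (AdjoinRoot Q)) (AdjoinRoot.of Q)]
    exact AdjoinRoot.eval₂_root Q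
  · intro x
    obtain ⟨p, rfl⟩ := AdjoinRoot.mk_surjective x
    refine ⟨p, ?_⟩
    rw [Subsingleton.elim (algebraMap ℚ (AdjoinRoot Q)) (AdjoinRoot.of Q)]
    exact AdjoinRoot.aeval_eq p
end

section
/- The polynomial R = x^32 - 4x^31 - 62x^30 + 558x^29 - 248x^28 - 23560x^27 + 143499x^26 + 59489x^25 - 4280108x^24 + 17190864x^23 + 12517459x^22 - 344750256x^21 + 1225662500x^20 - 278789479x^19 - 14790203106x^18 + 64357190741x^17 - 83774789980x^16 - 406418167694x^15 + 2480836111912x^14 - 5273524311353x^13 - 3257558862543x^12 + 54285321863574x^11 - 162450534558477x^10 + 197719989210108x^9 + 250865100757790x^8 - 1714511602191278x^7 + 4206562171750919x^6 - 6661579151098950x^5 + 7460752526582377x^4 - 5959749341609879x^3 + 3269911760551427x^2 - 1113936554991727x + 178725601175511 is irreducible over the rational numbers ℚ. -/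
open Polynomial

noncomputable def R : Polynomial ℚ :=
  X^32 - 4*X^31 - 62*X^30 + 558*X^29 - 248*X^28 - 23560*X^27 + 143499*X^26 + 59489*X^25 - 4280108*X^24 + 17190864*X^23 + 12517459*X^22 - 344750256*X^21 + 1225662500*X^20 - 278789479*X^19 - 14790203106*X^18 + 64357190741*X^17 - 83774789980*X^16 - 406418167694*X^15 + 2480836111912*X^14 - 5273524311353*X^13 - 3257558862543*X^12 + 54285321863574*X^11 - 162450534558477*X^10 + 197719989210108*X^9 + 250865100757790*X^8 - 1714511602191278*X^7 + 4206562171750919*X^6 - 6661579151098950*X^5 + 7460752526582377*X^4 - 5959749341609879*X^3 + 3269911760551427*X^2 - 1113936554991727*X + 178725601175511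

noncomputable def RZ : Polynomial ℤ :=
  X^32 - 4*X^31 - 62*X^30 + 558*X^29 - 248*X^28 - 23560*X^27 + 143499*X^26 + 59489*X^25 - 4280108*X^24 + 17190864*X^23 + 12517459*X^22 - 344750256*X^21 + 1225662500*X^20 - 278789479*X^19 - 14790203106*X^18 + 64357190741*X^17 - 83774789980*X^16 - 406418167694*X^15 + 2480836111912*X^14 - 5273524311353*X^13 - 3257558862543*X^12 + 54285321863574*X^11 - 162450534558477*X^10 + 197719989210108*X^9 + 250865100757790*X^8 - 1714511602191278*X^7 + 4206562171750919*X^6 - 6661579151098950*X^5 + 7460752526582377*X^4 - 5959749341609879*X^3 + 3269911760551427*X^2 - 1113936554991727*X + 178725601175511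

noncomputable def QZ : Polynomial ℤ :=
  (-2)*X^30 + (18)*X^29 + (-8)*X^28 + (-760)*X^27 + (4629)*X^26 + (1919)*X^25 + (-138068)*X^24 + (554544)*X^23 + (403789)*X^22 + (-11120976)*X^21 + (39537500)*X^20 + (-8993209)*X^19 + (-477103326)*X^18 + (2076038411)*X^17 + (-2702412580)*X^16 + (-13110263474)*X^15 + (80026971352)*X^14 + (-170113687463)*X^13 + (-105082543953)*X^12 + (1751139414954)*X^11 + (-5240339824467)*X^10 + (6378064168068)*X^9 + (8092422605090)*X^8 + (-55306825877138)*X^7 + (135695553927449)*X^6 + (-214889650035450)*X^5 + (240669436341367)*X^4 + (-192249978761609)*X^3 + (105481024533917)*X^2 + (-35933437257797)*X^1 + (5765341973401)*X^0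

lemma RZ_eq : RZ = (X^31 - 20) * (X - 4) + 31 * QZ := by
  unfold RZ QZ; ring

lemma RZ_monic : RZ.Monic := by
  unfold RZ; monicity!

lemma RZ_map : RZ.map (Int.castRingHom ℚ) = R := by
  unfold RZ R; simp

lemma RZ_map31 : RZ.map (Int.castRingHom (ZMod 31)) =
    (X - C 20)^31 * (X - C 4) := by
  have : Fact (Nat.Prime 31) := ⟨by norm_num⟩
  have h31 : (31 : (ZMod 31)[X]) = 0 := by
    exact_mod_cast CharP.cast_eq_zero ((ZMod 31)[X]) 31
  have h20 : (20 : ZMod 31)^31 = 20 := by clear h31; revert this; intro _; rfl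
  rw [RZ_eq, sub_pow_char (R := (ZMod 31)[X]) (p := 31), ← C_pow, h20]
  simp [h31]
  rfl

lemma RZ_noroot (a : ℤ) : RZ.eval a ≠ 0 := by
  intro h
  have h2 : ((RZ.eval a : ℤ) : ZMod 2) = 0 := by rw [h]; simp
  unfold RZ at h2
  simp at h2
  generalize (a : ZMod 2) = b at h2
  revert b
  decide

lemma RZ_eval20 : ¬ ((31:ℤ) * 31 ∣ RZ.eval 20) := by
  unfold RZ
  simp

lemma key (g h : ℤ[X]) (hg : g.Monic) (e : g * h = RZ) (hd : ¬ (31:ℤ) ∣ g.eval 20) :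
    g.natDegree = 0 := by
  have : Fact (Nat.Prime 31) := ⟨by norm_num⟩
  set φ := Int.castRingHom (ZMod 31)
  have hm : g.map φ ∣ (X - C 20)^31 * (X - C 4) := by
    rw [← RZ_map31, ← e, Polynomial.map_mul]; exact dvd_mul_right _ _
  have hc : IsCoprime (g.map φ) ((X - C 20)^31) := by
    apply IsCoprime.pow_right
    apply IsCoprime.symm
    rw [(irreducible_X_sub_C (20 : ZMod 31)).coprime_iff_not_dvd, dvd_iff_isRoot, IsRoot.def]
    intro h0
    apply hd
    have : ((g.eval 20 : ℤ) : ZMod 31) = 0 := by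
      rw [← h0]
      have := Polynomial.eval_map_apply (f := φ) (p := g) (x := 20)
      simpa [φ] using this.symm
    exact_mod_cast (ZMod.intCast_zmod_eq_zero_iff_dvd _ 31).1 this
  have hx := hc.dvd_of_dvd_mul_left hm
  have hdeg := natDegree_le_of_dvd hx (X_sub_C_ne_zero _)
  rw [hg.natDegree_map, natDegree_X_sub_C] at hdeg
  by_contra hne
  have h1 : g.natDegree = 1 := by omega
  have hgX := hg.eq_X_add_C h1
  apply RZ_noroot (-(g.coeff 0))
  rw [← e, eval_mul, hgX]
  simp

theorem irreducible_R : Irreducible R := by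
  rw [← RZ_map]
  apply (RZ_monic.irreducible_iff_irreducible_map_fraction_map (K := ℚ)).1
  have h1 : RZ ≠ 1 := by
    intro h
    have := RZ_eval20
    have h0 := congrArg (eval 0) h
    unfold RZ at h0
    simp at h0
  rw [RZ_monic.irreducible_iff_natDegree]
  refine ⟨h1, fun f g hf hg e => ?_⟩
  by_cases h : (31:ℤ) ∣ f.eval 20
  · right
    refine key g f hg (by rw [mul_comm, e]) fun h' => RZ_eval20 ?_
    rw [← e, eval_mul]
    exact mul_dvd_mul h h'
  · left
    exact key f g hf e h
end
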